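/- Let k ≥ 2, κ := 2^{k−1}, ε ∈ (0,1), let N ≥ 2 and Q0 ≥ 2 be real numbers with Q0 > N^{1/(2k)}, let q1 ∈ ℤ[i] with Q0/2^{1/k} < N(q1) ≤ Q0, and let r1 ∈ ℤ[i] be coprime to q1. Set S_k(q1,r1,j) := ∑_{q∈ℤ[i]} exp(−π N(q)/(κ Q0)) · e(Re(j r1 q^k / q1^k)). Then ∑_{j∈ℤ[i]\{0}, N(j) ≤ N·Q0^{ε−k}} |S_k(q1,r1,j)|^κ ≤ C(k,ε) · (Q0 N)^ε · (Q0^κ + N·Q0^{κ−k−1}), where C(k,ε) depends only on k and ε. -/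

import Mathlib

noncomputable section

/-- `e(t) = exp(2πit)`. -/
def e (t : ℝ) : ℂ := Complex.exp (2 * Real.pi * Complex.I * t)

/-- The norm of a Gaussian integer, as a real number. -/
def gN (z : GaussianInt) : ℝ := (z.re : ℝ) ^ 2 + (z.im : ℝ) ^ 2

/-- The smoothed `k`-th power Gauss-type sum
`S_k(q₁,r₁,j) = ∑_{q ∈ ℤ[i]} exp(-π N(q)/(κQ₀)) e(Re(j r₁ q^k/q₁^k))`, `κ = 2^{k-1}`. -/
def Sk (k : ℕ) (Q0 : ℝ) (q1 r1 j : GaussianInt) : ℂ :=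
  ∑' q : GaussianInt,
    ((Real.exp (-Real.pi * gN q / ((2 : ℝ) ^ (k - 1) * Q0)) : ℝ) : ℂ)
      * e (((j : ℂ) * (r1 : ℂ) * (q : ℂ) ^ k / (q1 : ℂ) ^ k).re)

section
open Real
open scoped ENNReal

lemma PS.e_add (s t : ℝ) : e (s + t) = e s * e t := by
  unfold e; rw [← Complex.exp_add]; congr 1; push_cast; ring

lemma PS.norm_e (t : ℝ) : ‖e t‖ = 1 := by
  unfold e
  have : (2 * π * Complex.I * t : ℂ) = ((2 * π * t : ℝ) : ℂ) * Complex.I := by push_cast; ring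
  rw [this, Complex.norm_exp_ofReal_mul_I]

lemma PS.conj_e (t : ℝ) : (starRingEnd ℂ) (e t) = e (-t) := by
  unfold e
  rw [← Complex.exp_conj]; congr 1
  simp [map_ofNat]

lemma PS.summ1 {a : ℝ} (ha : 0 < a) (x : ℝ) : Summable fun n : ℤ => exp (-a * ((n : ℝ) - x) ^ 2) := by
  have h := (summable_jacobiTheta₂_term_iff (((-(a * x / π) : ℝ) : ℂ) * Complex.I)
    (((a / π : ℝ) : ℂ) * Complex.I)).2 (by simp; positivity)
  have h2 := h.norm.mul_left (exp (-a * x ^ 2))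
  refine h2.congr ?_
  intro n
  unfold jacobiTheta₂_term
  rw [Complex.norm_exp, ← Real.exp_add]
  congr 1
  have : (2 * π * Complex.I * n * (((-(a * x / π) : ℝ) : ℂ) * Complex.I) +
      π * Complex.I * n ^ 2 * (((a / π : ℝ) : ℂ) * Complex.I) : ℂ)
      = ((2 * a * x * n - a * n ^ 2 : ℝ) : ℂ) := by
    have hp : (π : ℂ) ≠ 0 := by exact_mod_cast pi_ne_zero
    push_cast
    field_simp
    ring_nf
    simp only [Complex.I_sq]
    ring
  rw [this, Complex.ofReal_re]
  ring

lemma PS.poisson1 {Q : ℝ} (hQ : 0 < Q) (x y : ℝ) :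
    ‖∑' n : ℤ, ((exp (-(π / Q) * ((n : ℝ) - x) ^ 2) : ℝ) : ℂ) * e (y * n)‖
      ≤ √Q * ∑' n : ℤ, exp (-(π * Q) * ((n : ℝ) - y) ^ 2) := by
  have hQ' : (Q : ℂ) ≠ 0 := by exact_mod_cast hQ.ne'
  have hq := Complex.tsum_exp_neg_quadratic (a := ((1 / Q : ℝ) : ℂ)) (by simpa using hQ)
    ((x / Q : ℝ) + y * Complex.I)
  have h1 : ∀ n : ℤ, ((exp (-(π / Q) * ((n : ℝ) - x) ^ 2) : ℝ) : ℂ) * e (y * n)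
      = ((exp (-(π / Q) * x ^ 2) : ℝ) : ℂ) * Complex.exp (-π * ((1 / Q : ℝ) : ℂ) * n ^ 2
        + 2 * π * ((x / Q : ℝ) + y * Complex.I) * n) := by
    intro n
    unfold e
    rw [Complex.ofReal_exp, Complex.ofReal_exp, ← Complex.exp_add, ← Complex.exp_add]
    congr 1
    push_cast
    field_simp
    ring
  simp_rw [h1]
  rw [tsum_mul_left, hq, norm_mul, norm_mul]
  have h2 : ‖1 / (((1 / Q : ℝ) : ℂ)) ^ (1 / 2 : ℂ)‖ = √Q := by
    have : ((1 / 2 : ℂ)) = ((1 / 2 : ℝ) : ℂ) := by push_cast; rfl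
    rw [this, ← Complex.ofReal_cpow (by positivity), norm_div, norm_one, Complex.norm_real,
      ← Real.sqrt_eq_rpow, Real.norm_of_nonneg (by positivity)]
    simp
  rw [h2]
  have h3 : ∀ n : ℤ, ‖Complex.exp (-π / ((1 / Q : ℝ) : ℂ) *
      (n + Complex.I * ((x / Q : ℝ) + y * Complex.I)) ^ 2)‖
      = exp (π / Q * x ^ 2) * exp (-(π * Q) * ((n : ℝ) - y) ^ 2) := by
    intro n
    rw [Complex.norm_exp, ← Real.exp_add]
    congr 1
    have : (-π / ((1 / Q : ℝ) : ℂ) * (n + Complex.I * ((x / Q : ℝ) + y * Complex.I)) ^ 2)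
      = ((π / Q * x ^ 2 + -(π * Q) * ((n : ℝ) - y) ^ 2 : ℝ) : ℂ)
        + ((-2 * π * x * (n - y) : ℝ) : ℂ) * Complex.I := by
      push_cast
      field_simp
      ring_nf
      have h3 : Complex.I ^ 3 = - Complex.I := Complex.I_pow_three
      have h4 : Complex.I ^ 4 = 1 := Complex.I_pow_four
      simp only [Complex.I_sq, h3, h4]
      ring
    rw [this]
    simp only [Complex.add_re, Complex.ofReal_re, Complex.re_ofReal_mul, Complex.I_re, mul_zero, add_zero]
  have h4 : Summable fun n : ℤ => ‖Complex.exp (-π / ((1 / Q : ℝ) : ℂ) *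
      (n + Complex.I * ((x / Q : ℝ) + y * Complex.I)) ^ 2)‖ := by
    simp_rw [h3]
    exact (PS.summ1 (by positivity) y).mul_left _
  have h5 := norm_tsum_le_tsum_norm h4
  simp_rw [h3] at h5
  rw [tsum_mul_left] at h5
  rw [Complex.norm_real, Real.norm_of_nonneg (exp_pos _).le]
  calc _ ≤ exp (-(π / Q) * x ^ 2) * (√Q * (exp (π / Q * x ^ 2) *
        ∑' n : ℤ, exp (-(π * Q) * ((n : ℝ) - y) ^ 2))) := by gcongr
    _ = (exp (-(π / Q) * x ^ 2) * exp (π / Q * x ^ 2)) * (√Q *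
        ∑' n : ℤ, exp (-(π * Q) * ((n : ℝ) - y) ^ 2)) := by ring
    _ = _ := by rw [← Real.exp_add]; simp

/-- theta constant -/
def PS.θ : ℝ := ∑' n : ℤ, exp (-π * (n : ℝ) ^ 2)

lemma PS.summθ : Summable fun n : ℤ => exp (-π * (n : ℝ) ^ 2) := by
  simpa using PS.summ1 pi_pos 0

lemma PS.θ_pos : 0 < PS.θ := by
  refine PS.summθ.tsum_pos (fun _ => (exp_pos _).le) 0 (exp_pos _)

lemma PS.one_dim {Q : ℝ} (hQ : 1 ≤ Q) (x : ℝ) :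
    ∑' n : ℤ, exp (-(π / Q) * ((n : ℝ) - x) ^ 2) ≤ √Q * PS.θ := by
  have hQ0 : 0 < Q := by linarith
  have h := PS.poisson1 hQ0 x 0
  have h1 : ∀ n : ℤ, ((exp (-(π / Q) * ((n : ℝ) - x) ^ 2) : ℝ) : ℂ) * e (0 * n)
    = ((exp (-(π / Q) * ((n : ℝ) - x) ^ 2) : ℝ) : ℂ) := by intro n; simp [e]
  simp_rw [h1, ← Complex.ofReal_tsum] at h
  rw [Complex.norm_real] at h
  refine (le_abs_self _).trans (h.trans ?_)
  gcongr
  unfold PS.θ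
  refine Summable.tsum_le_tsum ?_ (PS.summ1 (by positivity) 0) PS.summθ
  intro n
  apply exp_le_exp.2
  have := mul_nonneg (mul_nonneg pi_pos.le (sub_nonneg.2 hQ)) (sq_nonneg (n : ℝ))
  nlinarith

/-- ℤ[i] ≃ ℤ × ℤ -/
def PS.eqv : ℤ × ℤ ≃ GaussianInt where
  toFun p := ⟨p.1, p.2⟩
  invFun z := (z.re, z.im)
  left_inv _ := rfl
  right_inv _ := rfl

lemma PS.nsq (q : GaussianInt) (x : ℂ) : ‖(q : ℂ) - x‖ ^ 2 = ((q.re : ℝ) - x.re) ^ 2 + ((q.im : ℝ) - x.im) ^ 2 := by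
  rw [← Complex.normSq_eq_norm_sq, Complex.normSq_apply]
  simp
  ring

lemma PS.gN_eq (q : GaussianInt) : gN q = ‖(q : ℂ)‖ ^ 2 := by
  have := PS.nsq q 0
  simp at this
  rw [gN, this]; simp

lemma PS.split (a : ℝ) (p : ℤ × ℤ) (x : ℂ) : exp (-a * ‖((PS.eqv p : GaussianInt) : ℂ) - x‖ ^ 2)
    = exp (-a * ((p.1 : ℝ) - x.re) ^ 2) * exp (-a * ((p.2 : ℝ) - x.im) ^ 2) := by
  rw [PS.nsq, ← Real.exp_add]
  congr 1
  simp only [PS.eqv, Equiv.coe_fn_mk]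
  ring

lemma PS.summ2 {a : ℝ} (ha : 0 < a) (x : ℂ) :
    Summable fun q : GaussianInt => exp (-a * ‖(q : ℂ) - x‖ ^ 2) := by
  rw [← PS.eqv.summable_iff]
  refine ((PS.summ1 ha x.re).mul_of_nonneg (PS.summ1 ha x.im) (fun _ => (exp_pos _).le)
    (fun _ => (exp_pos _).le)).congr ?_
  intro p
  exact (PS.split a p x).symm

lemma PS.two_dim_real {a : ℝ} (ha : 0 < a) (x : ℂ) :
    ∑' q : GaussianInt, exp (-a * ‖(q : ℂ) - x‖ ^ 2)
     = (∑' n : ℤ, exp (-a * ((n : ℝ) - x.re) ^ 2)) * ∑' n : ℤ, exp (-a * ((n : ℝ) - x.im) ^ 2) := by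
  rw [← PS.eqv.tsum_eq]
  simp_rw [PS.split]
  rw [tsum_mul_tsum_of_summable_norm (PS.summ1 ha x.re).norm (PS.summ1 ha x.im).norm]

lemma PS.two_dim {Q : ℝ} (hQ : 1 ≤ Q) (x : ℂ) :
    ∑' q : GaussianInt, exp (-(π / Q) * ‖(q : ℂ) - x‖ ^ 2) ≤ PS.θ ^ 2 * Q := by
  have hQ0 : 0 < Q := by linarith
  rw [PS.two_dim_real (by positivity)]
  have h1 := PS.one_dim hQ x.re
  have h2 := PS.one_dim hQ x.im
  have := PS.θ_pos
  calc _ ≤ (√Q * PS.θ) * (√Q * PS.θ) := by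
        gcongr
    _ = (√Q * √Q) * PS.θ ^ 2 := by ring
    _ = _ := by rw [Real.mul_self_sqrt hQ0.le]; ring

lemma PS.two_dim_gen {a : ℝ} (ha : 0 < a) (x : ℂ) :
    ∑' q : GaussianInt, exp (-a * ‖(q : ℂ) - x‖ ^ 2) ≤ PS.θ ^ 2 * (1 + π / a) := by
  have hQ : 1 ≤ 1 + π / a := by have : 0 < π / a := by positivity
                                linarith
  refine le_trans ?_ (PS.two_dim hQ x)
  refine Summable.tsum_le_tsum ?_ (PS.summ2 ha x) (PS.summ2 (by positivity) x)
  intro q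
  apply exp_le_exp.2
  have : π / (1 + π / a) ≤ a := by
    rw [div_le_iff₀ (by linarith)]
    have : a * (1 + π / a) = a + π := by field_simp
    linarith
  have := mul_le_mul_of_nonneg_right this (sq_nonneg ‖(q : ℂ) - x‖)
  linarith


/-- Gaussian sum with phase -/
def PS.T (a : ℝ) (x : ℂ) (φ : GaussianInt → ℝ) : ℂ :=
  ∑' q : GaussianInt, ((exp (-a * ‖(q : ℂ) - x‖ ^ 2) : ℝ) : ℂ) * e (φ q)

/-- dual theta function -/
def PS.W (Q0 : ℝ) (α : ℂ) : ℝ≥0∞ :=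
  ∑' ν : GaussianInt, ENNReal.ofReal (exp (-(π * Q0) * ‖(ν : ℂ) - α‖ ^ 2))

lemma PS.norm_term (a : ℝ) (x : ℂ) (φ : GaussianInt → ℝ) (q : GaussianInt) :
    ‖((exp (-a * ‖(q : ℂ) - x‖ ^ 2) : ℝ) : ℂ) * e (φ q)‖ = exp (-a * ‖(q : ℂ) - x‖ ^ 2) := by
  rw [norm_mul, PS.norm_e, mul_one, Complex.norm_real, Real.norm_of_nonneg (exp_pos _).le]

lemma PS.summT {a : ℝ} (ha : 0 < a) (x : ℂ) (φ : GaussianInt → ℝ) :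
    Summable fun q : GaussianInt => ‖((exp (-a * ‖(q : ℂ) - x‖ ^ 2) : ℝ) : ℂ) * e (φ q)‖ := by
  simp_rw [PS.norm_term]
  exact PS.summ2 ha x

/-- shift equivalence -/
def PS.shear : GaussianInt × GaussianInt ≃ GaussianInt × GaussianInt where
  toFun p := (p.2 + p.1, p.2)
  invFun p := (p.1 - p.2, p.2)
  left_inv p := by simp
  right_inv p := by simp

lemma PS.parallelogram (a : ℝ) (x q h : ℂ) :
    exp (-a * ‖q + h - x‖ ^ 2) * exp (-a * ‖q - x‖ ^ 2)
      = exp (-(a / 2) * ‖h‖ ^ 2) * exp (-(2 * a) * ‖q - (x - h / 2)‖ ^ 2) := by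
  rw [← Real.exp_add, ← Real.exp_add]
  congr 1
  simp only [← Complex.normSq_eq_norm_sq, Complex.normSq_apply]
  simp
  ring

lemma PS.shear_sum (f : GaussianInt × GaussianInt → ℂ) (hs : Summable f) :
    ∑' p, f p = ∑' h : GaussianInt, ∑' q : GaussianInt, f (q + h, q) := by
  have h3 := PS.shear.tsum_eq f
  have h4 := (PS.shear.summable_iff.2 hs).tsum_prod
  rw [← h3]
  exact h4

lemma PS.vdc (f : GaussianInt → ℂ) (hs : Summable fun q => ‖f q‖) :
    ‖∑' q, f q‖ₑ ^ 2 ≤ ∑' h : GaussianInt, ‖∑' q : GaussianInt, f (q + h) * (starRingEnd ℂ) (f q)‖ₑ := by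
  obtain ⟨g, hg⟩ : ∃ g : GaussianInt → ℂ, ∀ q, g q = (starRingEnd ℂ) (f q) := ⟨_, fun _ => rfl⟩
  have hs' : Summable fun q => ‖g q‖ := by
    simpa only [hg, RCLike.norm_conj] using hs
  have h1 : (∑' q, f q) * (starRingEnd ℂ) (∑' q, f q)
      = ∑' p : GaussianInt × GaussianInt, f p.1 * g p.2 := by
    rw [← tsum_mul_tsum_of_summable_norm hs hs', Complex.conj_tsum]
    simp_rw [hg]
  have hsum : Summable fun p : GaussianInt × GaussianInt => f p.1 * g p.2 :=
    summable_mul_of_summable_norm hs hs'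
  have h2 : ‖∑' q, f q‖ₑ ^ 2 = ‖(∑' q, f q) * (starRingEnd ℂ) (∑' q, f q)‖ₑ := by
    rw [enorm_mul, sq]
    congr 1
    rw [← ofReal_norm, ← ofReal_norm, RCLike.norm_conj]
  rw [h2, h1, PS.shear_sum _ hsum]
  refine enorm_tsum_le_tsum_enorm.trans ?_
  simp_rw [hg]
  exact le_rfl

lemma PS.weyl {a : ℝ} (ha : 0 < a) (x : ℂ) (φ : GaussianInt → ℝ) :
    ‖PS.T a x φ‖ₑ ^ 2 ≤ ∑' h : GaussianInt, ENNReal.ofReal (exp (-(a / 2) * ‖(h : ℂ)‖ ^ 2)) *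
      ‖PS.T (2 * a) (x - (h : ℂ) / 2) (fun q => φ (q + h) - φ q)‖ₑ := by
  refine (PS.vdc _ (PS.summT ha x φ)).trans ?_
  refine ENNReal.tsum_le_tsum fun h => ?_
  have h3 : ∀ q : GaussianInt, ((exp (-a * ‖((q + h : GaussianInt) : ℂ) - x‖ ^ 2) : ℝ) : ℂ) * e (φ (q + h)) *
      (starRingEnd ℂ) (((exp (-a * ‖(q : ℂ) - x‖ ^ 2) : ℝ) : ℂ) * e (φ q))
      = ((exp (-(a / 2) * ‖(h : ℂ)‖ ^ 2) : ℝ) : ℂ) *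
        (((exp (-(2 * a) * ‖(q : ℂ) - (x - (h : ℂ) / 2)‖ ^ 2) : ℝ) : ℂ) * e (φ (q + h) - φ q)) := by
    intro q
    rw [map_mul, Complex.conj_ofReal, PS.conj_e]
    rw [sub_eq_add_neg (φ (q + h)), PS.e_add]
    have := PS.parallelogram a x q h
    rw [← GaussianInt.toComplex_add] at this
    have h' : ((exp (-a * ‖((q + h : GaussianInt) : ℂ) - x‖ ^ 2) : ℝ) : ℂ) * ((exp (-a * ‖(q : ℂ) - x‖ ^ 2) : ℝ) : ℂ)
      = ((exp (-(a / 2) * ‖(h : ℂ)‖ ^ 2) : ℝ) : ℂ) * ((exp (-(2 * a) * ‖(q : ℂ) - (x - (h : ℂ) / 2)‖ ^ 2) : ℝ) : ℂ) := by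
      rw [← Complex.ofReal_mul, this, Complex.ofReal_mul]
    linear_combination (e (φ (q + h)) * e (-φ q)) * h'
  rw [tsum_congr h3, tsum_mul_left, enorm_mul]
  apply le_of_eq
  unfold PS.T
  congr 1
  rw [← ofReal_norm, Complex.norm_real, Real.norm_of_nonneg (exp_pos _).le]

lemma PS.jensen {ι : Type*} (w f : ι → ℝ≥0∞) (n : ℕ) :
    (∑' i, w i * f i) ^ (n + 1) ≤ (∑' i, w i) ^ n * ∑' i, w i * f i ^ (n + 1) := by
  have hp : (1 : ℝ) ≤ ((n + 1 : ℕ) : ℝ) := by exact_mod_cast Nat.succ_le_succ (Nat.zero_le n)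
  have hp0 : ((n + 1 : ℕ) : ℝ) ≠ 0 := by positivity
  have h : ∑' i, w i * f i ≤ (∑' i, w i) ^ (1 - ((n + 1 : ℕ) : ℝ)⁻¹) *
      (∑' i, w i * f i ^ ((n + 1 : ℕ) : ℝ)) ^ (((n + 1 : ℕ) : ℝ)⁻¹) := by
    rw [ENNReal.tsum_eq_iSup_sum]
    refine iSup_le fun s => ?_
    refine (ENNReal.inner_le_weight_mul_Lp_of_nonneg s hp w f).trans ?_
    have h1 : (0 : ℝ) ≤ 1 - ((n + 1 : ℕ) : ℝ)⁻¹ := by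
      have := inv_le_one_of_one_le₀ hp
      linarith
    gcongr
    · exact ENNReal.sum_le_tsum s
    · exact ENNReal.sum_le_tsum s
  calc _ ≤ _ := pow_le_pow_left' h (n + 1)
    _ = _ := by
      rw [mul_pow, ← ENNReal.rpow_natCast, ← ENNReal.rpow_natCast, ← ENNReal.rpow_mul,
        ← ENNReal.rpow_mul, inv_mul_cancel₀ hp0, ENNReal.rpow_one]
      simp_rw [ENNReal.rpow_natCast]
      congr 1
      rw [← ENNReal.rpow_natCast]
      congr 1
      rw [sub_mul, inv_mul_cancel₀ hp0]
      push_cast; ring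

/-- iterated averaged dual sum -/
def PS.F (Q0 : ℝ) (u : GaussianInt → ℝ≥0∞) : ℕ → ℂ → ℝ≥0∞
  | 0, α => PS.W Q0 α
  | m + 1, α => ∑' h : GaussianInt, u h * PS.F Q0 u m (((m : ℂ) + 2) * α * h)

open Polynomial in
lemma PS.delta_poly (p : ℂ[X]) (m : ℕ) (hp : p.natDegree ≤ m + 2) (h : ℂ) :
    (taylor h p - p).natDegree ≤ m + 1 ∧
      (taylor h p - p).coeff (m + 1) = ((m : ℂ) + 2) * p.coeff (m + 2) * h := by
  constructor
  · rw [natDegree_le_iff_coeff_eq_zero]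
    intro N hN
    rw [coeff_sub, taylor_coeff]
    have h1 : (hasseDeriv N p).natDegree ≤ 0 := by
      have := natDegree_hasseDeriv_le p N; omega
    rw [eq_C_of_natDegree_le_zero h1, eval_C, hasseDeriv_coeff]
    simp
  · rw [coeff_sub, taylor_coeff]
    have h1 : (hasseDeriv (m + 1) p).natDegree ≤ 1 := by
      have := natDegree_hasseDeriv_le p (m + 1); omega
    rw [eq_X_add_C_of_natDegree_le_one h1]
    simp only [eval_add, eval_mul, eval_C, eval_X, hasseDeriv_coeff]
    have : 1 + (m + 1) = m + 2 := by ring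
    rw [this]
    have h2 : (m + 2).choose (m + 1) = m + 2 := by
      rw [show m + 2 = (m + 1) + 1 from rfl, Nat.choose_succ_self_right]
    rw [h2]
    simp

lemma PS.base {Q0 : ℝ} (hQ : 0 < Q0) (x α c : ℂ) :
    ‖PS.T (π / Q0) x (fun q => (α * q + c).re)‖ₑ ≤ ENNReal.ofReal Q0 * PS.W Q0 α := by
  have ha : 0 < π / Q0 := by positivity
  have hb : 0 < π * Q0 := by positivity
  set f : ℤ → ℂ := fun n => ((exp (-(π / Q0) * ((n : ℝ) - x.re) ^ 2) : ℝ) : ℂ) * e (α.re * n) with hf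
  set g : ℤ → ℂ := fun n => ((exp (-(π / Q0) * ((n : ℝ) - x.im) ^ 2) : ℝ) : ℂ) * e (-α.im * n) with hg
  have nf : ∀ (y t : ℝ) (n : ℤ), ‖((exp (-(π / Q0) * ((n : ℝ) - y) ^ 2) : ℝ) : ℂ) * e (t * n)‖
      = exp (-(π / Q0) * ((n : ℝ) - y) ^ 2) := by
    intro y t n
    rw [norm_mul, PS.norm_e, mul_one, Complex.norm_real, Real.norm_of_nonneg (exp_pos _).le]
  have hfs : Summable fun n => ‖f n‖ := by simp_rw [hf, nf]; exact PS.summ1 ha _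
  have hgs : Summable fun n => ‖g n‖ := by simp_rw [hg, nf]; exact PS.summ1 ha _
  have h1 : PS.T (π / Q0) x (fun q => (α * q + c).re) = e c.re * ((∑' n, f n) * ∑' n, g n) := by
    rw [tsum_mul_tsum_of_summable_norm hfs hgs, ← tsum_mul_left]
    unfold PS.T
    rw [← PS.eqv.tsum_eq]
    congr 1
    ext p
    rw [PS.split]
    have : (α * ((PS.eqv p : GaussianInt) : ℂ) + c).re = c.re + (α.re * p.1 + -α.im * p.2) := by
      simp [PS.eqv]; ring
    beta_reduce
    rw [this, PS.e_add, PS.e_add]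
    simp only [hf, hg]
    push_cast
    ring
  have h2 : ‖PS.T (π / Q0) x (fun q => (α * q + c).re)‖ ≤ Q0 *
      ∑' ν : GaussianInt, exp (-(π * Q0) * ‖(ν : ℂ) - α‖ ^ 2) := by
    rw [h1, norm_mul, norm_mul, PS.norm_e, one_mul, PS.two_dim_real hb]
    have e1 := PS.poisson1 hQ x.re α.re
    have e2 := PS.poisson1 hQ x.im (-α.im)
    have e3 : ∑' n : ℤ, exp (-(π * Q0) * ((n : ℝ) - -α.im) ^ 2)
       = ∑' n : ℤ, exp (-(π * Q0) * ((n : ℝ) - α.im) ^ 2) := by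
      rw [← (Equiv.neg ℤ).tsum_eq]
      congr 1; ext n
      simp only [Equiv.neg_apply]
      push_cast
      congr 1; ring
    rw [e3] at e2
    calc _ ≤ (√Q0 * ∑' n : ℤ, exp (-(π * Q0) * ((n : ℝ) - α.re) ^ 2)) *
          (√Q0 * ∑' n : ℤ, exp (-(π * Q0) * ((n : ℝ) - α.im) ^ 2)) := by
            exact mul_le_mul e1 e2 (norm_nonneg _) (by positivity)
      _ = (√Q0 * √Q0) * ((∑' n : ℤ, exp (-(π * Q0) * ((n : ℝ) - α.re) ^ 2)) *
          ∑' n : ℤ, exp (-(π * Q0) * ((n : ℝ) - α.im) ^ 2)) := by ring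
      _ = _ := by rw [Real.mul_self_sqrt hQ.le]
  rw [← ofReal_norm]
  refine (ENNReal.ofReal_le_ofReal h2).trans ?_
  rw [ENNReal.ofReal_mul hQ.le, ENNReal.ofReal_tsum_of_nonneg (fun _ => (exp_pos _).le) (PS.summ2 hb α)]
  rfl

open Polynomial in
lemma PS.weyl_iter {Q0 c : ℝ} (hQ : 0 < Q0) (u : GaussianInt → ℝ≥0∞)
    (hu : ∀ h, u h = ENNReal.ofReal (exp (-c * ‖(h : ℂ)‖ ^ 2))) (K : ℝ≥0∞) (hK : ∑' h, u h ≤ K) :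
    ∀ (m : ℕ), c ≤ π / (2 ^ (m + 1) * Q0) → ∀ (x : ℂ) (p : ℂ[X]), p.natDegree ≤ m + 1 →
    ‖PS.T (π / (2 ^ m * Q0)) x (fun q => (p.eval (q : ℂ)).re)‖ₑ ^ (2 ^ m) ≤
      ENNReal.ofReal Q0 * K ^ (2 ^ m - (m + 1)) * PS.F Q0 u m (p.coeff (m + 1)) := by
  intro m
  induction m with
  | zero =>
    intro _ x p hp
    have := PS.base hQ x (p.coeff 1) (p.coeff 0)
    rw [eq_X_add_C_of_natDegree_le_one hp]
    simpa [PS.F] using this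
  | succ m ih =>
    intro hc x p hp
    have hpow : (0 : ℝ) < 2 ^ m := by positivity
    have hm : m + 1 ≤ 2 ^ m := Nat.lt_two_pow_self
    have e1 : 2 * (π / (2 ^ (m + 1) * Q0)) = π / (2 ^ m * Q0) := by
      rw [pow_succ]; field_simp
    have e2 : π / (2 ^ (m + 1) * Q0) / 2 = π / (2 ^ (m + 2) * Q0) := by
      rw [pow_succ _ (m + 1)]; field_simp
    have hcm : c ≤ π / (2 ^ (m + 1) * Q0) := by
      have h1 : c ≤ π / (2 ^ (m + 1) * Q0) / 2 := by rw [e2]; exact hc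
      have : 0 < π / (2 ^ (m + 1) * Q0) := by positivity
      linarith
    have step := PS.weyl (a := π / (2 ^ (m + 1) * Q0)) (by positivity) x (fun q => (p.eval (q : ℂ)).re)
    rw [e1, e2] at step
    set B : GaussianInt → ℝ≥0∞ := fun h => ‖PS.T (π / (2 ^ m * Q0)) (x - (h : ℂ) / 2)
      (fun q => ((taylor (h : ℂ) p - p).eval (q : ℂ)).re)‖ₑ with hB
    have step2 : ‖PS.T (π / (2 ^ (m + 1) * Q0)) x (fun q => (p.eval (q : ℂ)).re)‖ₑ ^ 2
        ≤ ∑' h, u h * B h := by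
      refine step.trans (ENNReal.tsum_le_tsum fun h => ?_)
      rw [hu, hB]
      have e3 : (fun q : GaussianInt => (p.eval ((q + h : GaussianInt) : ℂ)).re - (p.eval (q : ℂ)).re)
        = (fun q : GaussianInt => ((taylor (h : ℂ) p - p).eval (q : ℂ)).re) := by
        funext q
        rw [eval_sub, taylor_eval, Complex.sub_re, GaussianInt.toComplex_add]
      rw [e3]
      gcongr
    have hB2 : ∀ h, B h ^ (2 ^ m) ≤ ENNReal.ofReal Q0 * K ^ (2 ^ m - (m + 1)) *
        PS.F Q0 u m (((m : ℂ) + 2) * p.coeff (m + 2) * h) := by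
      intro h
      obtain ⟨d1, d2⟩ := PS.delta_poly p m hp h
      have := ih hcm (x - (h : ℂ) / 2) _ d1
      rwa [d2] at this
    obtain ⟨n, hn⟩ : ∃ n, 2 ^ m = n + 1 := ⟨2 ^ m - 1, by omega⟩
    have e4 : 2 ^ (m + 1) - (m + 1 + 1) = n + (2 ^ m - (m + 1)) := by
      rw [pow_succ]; omega
    calc _ = (‖PS.T (π / (2 ^ (m + 1) * Q0)) x (fun q => (p.eval (q : ℂ)).re)‖ₑ ^ 2) ^ (2 ^ m) := by
          rw [← pow_mul, ← pow_succ']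
      _ ≤ (∑' h, u h * B h) ^ (2 ^ m) := pow_le_pow_left' step2 _
      _ ≤ (∑' h, u h) ^ n * ∑' h, u h * B h ^ (2 ^ m) := by rw [hn]; exact PS.jensen u B n
      _ ≤ K ^ n * ∑' h, u h * (ENNReal.ofReal Q0 * K ^ (2 ^ m - (m + 1)) *
        PS.F Q0 u m (((m : ℂ) + 2) * p.coeff (m + 2) * h)) := by
          gcongr with h
          exact hB2 h
      _ = ENNReal.ofReal Q0 * K ^ (2 ^ (m + 1) - (m + 1 + 1)) * PS.F Q0 u (m + 1) (p.coeff (m + 2)) := by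
          rw [e4, pow_add, PS.F]
          rw [← ENNReal.tsum_mul_left, ← ENNReal.tsum_mul_left]
          congr 1; ext h; ring


lemma PS.gN_mul (a b : GaussianInt) : gN (a * b) = gN a * gN b := by
  rw [PS.gN_eq, PS.gN_eq, PS.gN_eq, GaussianInt.toComplex_mul, norm_mul]; ring

lemma PS.gN_nonneg (a : GaussianInt) : 0 ≤ gN a := by unfold gN; positivity

lemma PS.gN_natCast (n : ℕ) : gN (n : GaussianInt) = (n : ℝ) ^ 2 := by
  unfold gN; simp

lemma PS.gN_pos {a : GaussianInt} (h : a ≠ 0) : 0 < gN a := by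
  rw [PS.gN_eq]
  have : (a : ℂ) ≠ 0 := by simpa using h
  positivity

lemma PS.one_le_gN {a : GaussianInt} (h : a ≠ 0) : 1 ≤ gN a := by
  have h1 := PS.gN_pos h
  unfold gN at *
  have : 0 < a.re ^ 2 + a.im ^ 2 := by exact_mod_cast h1
  exact_mod_cast this

lemma PS.gauss_enn {a : ℝ} (ha : 0 < a) (x : ℂ) :
    ∑' q : GaussianInt, ENNReal.ofReal (exp (-a * ‖(q : ℂ) - x‖ ^ 2)) ≤
      ENNReal.ofReal (PS.θ ^ 2 * (1 + π / a)) := by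
  rw [← ENNReal.ofReal_tsum_of_nonneg (fun _ => (exp_pos _).le) (PS.summ2 ha x)]
  exact ENNReal.ofReal_le_ofReal (PS.two_dim_gen ha x)

lemma PS.gauss_enn0 {a : ℝ} (ha : 0 < a) :
    ∑' q : GaussianInt, ENNReal.ofReal (exp (-a * ‖(q : ℂ)‖ ^ 2)) ≤
      ENNReal.ofReal (PS.θ ^ 2 * (1 + π / a)) := by
  simpa using PS.gauss_enn ha 0

lemma PS.W_le {Q0 : ℝ} (hQ : 1 ≤ Q0) (α : ℂ) : PS.W Q0 α ≤ ENNReal.ofReal (2 * PS.θ ^ 2) := by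
  refine (PS.gauss_enn (by positivity) α).trans (ENNReal.ofReal_le_ofReal ?_)
  have : π / (π * Q0) ≤ 1 := by
    rw [div_le_one (by positivity)]
    nlinarith [pi_pos]
  nlinarith [sq_nonneg PS.θ]

lemma PS.F_le {Q0 : ℝ} (u : GaussianInt → ℝ≥0∞) (K Wm : ℝ≥0∞) (hK : ∑' h, u h ≤ K)
    (hW : ∀ α, PS.W Q0 α ≤ Wm) : ∀ (m : ℕ) (α : ℂ), PS.F Q0 u m α ≤ K ^ m * Wm := by
  intro m
  induction m with
  | zero => intro α; simpa [PS.F] using hW α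
  | succ m ih =>
    intro α
    rw [PS.F]
    calc _ ≤ ∑' h, u h * (K ^ m * Wm) := ENNReal.tsum_le_tsum fun h => by gcongr; exact ih _
      _ = (∑' h, u h) * (K ^ m * Wm) := ENNReal.tsum_mul_right
      _ ≤ K * (K ^ m * Wm) := by gcongr
      _ = _ := by ring

/-- truncated iterated sum -/
def PS.Gd (Q0 : ℝ) (H : Finset GaussianInt) : ℕ → ℂ → ℝ≥0∞
  | 0, α => PS.W Q0 α
  | m + 1, α => ∑ h ∈ H, PS.Gd Q0 H m (((m : ℂ) + 2) * α * h)

lemma PS.F_le_G {Q0 : ℝ} (u : GaussianInt → ℝ≥0∞) (K KB Wm : ℝ≥0∞) (hK : ∑' h, u h ≤ K)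
    (hu : ∀ h, u h ≤ 1) (H : Finset GaussianInt) (hKB : ∑' h, (if h ∈ H then 0 else u h) ≤ KB)
    (hW : ∀ α, PS.W Q0 α ≤ Wm) : ∀ (m : ℕ) (α : ℂ),
    PS.F Q0 u m α ≤ m * KB * K ^ (m - 1) * Wm + PS.Gd Q0 H m α := by
  intro m
  induction m with
  | zero => intro α; simp [PS.F, PS.Gd]
  | succ m ih =>
    intro α
    rw [PS.F, PS.Gd]
    have hpt : ∀ h, u h * PS.F Q0 u m (((m : ℂ) + 2) * α * h) ≤
        u h * (m * KB * K ^ (m - 1) * Wm) + (if h ∈ H then PS.Gd Q0 H m (((m : ℂ) + 2) * α * h) else 0)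
        + (if h ∈ H then 0 else u h) * (K ^ m * Wm) := by
      intro h
      by_cases hh : h ∈ H
      · simp only [hh, if_true, zero_mul, add_zero]
        calc _ ≤ u h * (m * KB * K ^ (m - 1) * Wm + PS.Gd Q0 H m (((m : ℂ) + 2) * α * h)) := by
              gcongr; exact ih _
          _ ≤ _ := by
              rw [mul_add]
              gcongr
              exact mul_le_of_le_one_left' (hu h)
      · simp only [hh, if_false]
        refine le_trans ?_ le_add_self
        gcongr
        exact PS.F_le u K Wm hK hW m _
    refine (ENNReal.tsum_le_tsum hpt).trans ?_
    rw [ENNReal.tsum_add, ENNReal.tsum_add, ENNReal.tsum_mul_right, ENNReal.tsum_mul_right]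
    have h1 : ∑' h, (if h ∈ H then PS.Gd Q0 H m (((m : ℂ) + 2) * α * h) else 0)
        = ∑ h ∈ H, PS.Gd Q0 H m (((m : ℂ) + 2) * α * h) := by
      rw [tsum_eq_sum (s := H)]
      · exact Finset.sum_congr rfl fun h hh => by simp [hh]
      · intro b hb; simp [hb]
    rw [h1]
    have h2 : (∑' h, u h) * (m * KB * K ^ (m - 1) * Wm) ≤ m * KB * K ^ m * Wm := by
      rcases m with _ | m
      · simp
      · calc _ ≤ K * (((m + 1 : ℕ) : ℝ≥0∞) * KB * K ^ (m + 1 - 1) * Wm) := by gcongr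
          _ = _ := by rw [Nat.add_sub_cancel, pow_succ]; ring
    calc _ ≤ m * KB * K ^ m * Wm + (∑ h ∈ H, PS.Gd Q0 H m (((m : ℂ) + 2) * α * h)) + KB * (K ^ m * Wm) := by
          gcongr
      _ = _ := by rw [Nat.add_sub_cancel]; push_cast; ring

open scoped Classical in
lemma PS.G_sum {Q0 : ℝ} (β : ℂ) (H : Finset GaussianInt) (D : ℝ≥0∞) (L Mx : ℝ) (hL : 1 ≤ L)
    (hH : ∀ h ∈ H, h ≠ 0 ∧ gN h ≤ L)
    (hD : ∀ n : GaussianInt, n ≠ 0 → gN n ≤ Mx → ((H.filter (fun h => h ∣ n)).card : ℝ≥0∞) ≤ D) :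
    ∀ (m : ℕ) (R : ℝ), 0 ≤ R → ∀ (w : GaussianInt → ℝ≥0∞) (A : ℝ≥0∞), (∀ n, w n ≤ A) →
    (∀ n, w n ≠ 0 → n ≠ 0 ∧ gN n ≤ R) → R * ((m + 1).factorial : ℝ) ^ 2 * L ^ m ≤ Mx →
    ∑' j : GaussianInt, w j * PS.Gd Q0 H m ((j : ℂ) * β) ≤
      A * D ^ m * ∑' n : GaussianInt, if gN n ≤ Mx then PS.W Q0 ((n : ℂ) * β) else 0 := by
  intro m
  induction m with
  | zero =>
    intro R hR w A hwA hwS hM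
    simp only [Nat.factorial, pow_zero, mul_one, Nat.cast_one, one_pow] at hM
    rw [pow_zero, mul_one, ← ENNReal.tsum_mul_left]
    refine ENNReal.tsum_le_tsum fun j => ?_
    by_cases hj : w j = 0
    · simp [hj]
    · rw [if_pos ((hwS j hj).2.trans hM), PS.Gd]
      gcongr
      exact hwA j
  | succ m ih =>
    intro R hR w A hwA hwS hM
    set w' : GaussianInt → ℝ≥0∞ := fun n => ∑ h ∈ H, ∑' j : GaussianInt,
      if ((m + 2 : ℕ) : GaussianInt) * j * h = n then w j else 0 with hw'
    have hfac : (1 : ℝ) ≤ ((m + 1).factorial : ℝ) ^ 2 * L ^ m := by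
      have h1 : (1 : ℝ) ≤ ((m + 1).factorial : ℝ) := by exact_mod_cast Nat.factorial_pos _
      exact one_le_mul_of_one_le_of_one_le (one_le_pow₀ h1) (one_le_pow₀ hL)
    have hM' : R * ((m : ℝ) + 2) ^ 2 * L * ((m + 1).factorial : ℝ) ^ 2 * L ^ m ≤ Mx := by
      refine le_trans (le_of_eq ?_) hM
      rw [show m + 1 + 1 = (m + 1) + 1 from rfl, Nat.factorial_succ (m + 1)]
      push_cast; ring
    have hR' : 0 ≤ R * ((m : ℝ) + 2) ^ 2 * L := by positivity
    have hM'' : R * ((m : ℝ) + 2) ^ 2 * L ≤ Mx := by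
      refine le_trans ?_ hM'
      rw [mul_assoc _ (((m + 1).factorial : ℝ) ^ 2)]
      exact le_mul_of_one_le_right hR' hfac
    have hS' : ∀ n, w' n ≠ 0 → n ≠ 0 ∧ gN n ≤ R * ((m : ℝ) + 2) ^ 2 * L := by
      intro n hn
      simp only [hw'] at hn
      obtain ⟨h, hh, hn⟩ := Finset.exists_ne_zero_of_sum_ne_zero hn
      obtain ⟨j, hj⟩ : ∃ j : GaussianInt, (if ((m + 2 : ℕ) : GaussianInt) * j * h = n then w j else 0) ≠ 0 := by
        by_contra hcon
        push Not at hcon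
        exact hn (ENNReal.tsum_eq_zero.2 hcon)
      by_cases hc : ((m + 2 : ℕ) : GaussianInt) * j * h = n
      · rw [if_pos hc] at hj
        obtain ⟨j1, j2⟩ := hwS j hj
        obtain ⟨h1, h2⟩ := hH h hh
        rw [← hc]
        constructor
        · refine mul_ne_zero (mul_ne_zero ?_ j1) h1
          exact_mod_cast (by omega : m + 2 ≠ 0)
        · rw [PS.gN_mul, PS.gN_mul, PS.gN_natCast]
          push_cast
          have := PS.gN_nonneg j
          have := PS.gN_nonneg h
          calc ((m : ℝ) + 2) ^ 2 * gN j * gN h ≤ ((m : ℝ) + 2) ^ 2 * R * L := by gcongr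
            _ = _ := by ring
      · rw [if_neg hc] at hj; exact absurd rfl hj
    have hA' : ∀ n, w' n ≤ A * D := by
      intro n
      by_cases hn : w' n = 0
      · rw [hn]; exact zero_le
      obtain ⟨n1, n2⟩ := hS' n hn
      have hDn := hD n n1 (n2.trans hM'')
      calc w' n ≤ ∑ h ∈ H, if h ∣ n then A else 0 := by
            refine Finset.sum_le_sum fun h hh => ?_
            by_cases hex : ∃ j : GaussianInt, ((m + 2 : ℕ) : GaussianInt) * j * h = n
            · obtain ⟨j0, hj0⟩ := hex
              rw [if_pos ⟨_, by rw [← hj0, mul_comm]⟩, tsum_eq_single j0, if_pos hj0]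
              · exact hwA j0
              · intro j hj
                rw [if_neg]
                intro hc
                apply hj
                have h2 : ((m + 2 : ℕ) : GaussianInt) ≠ 0 := by exact_mod_cast (by omega : m + 2 ≠ 0)
                exact mul_left_cancel₀ h2 (mul_right_cancel₀ (hH h hh).1 (hc.trans hj0.symm))
            · push Not at hex
              have : ∑' j : GaussianInt, (if ((m + 2 : ℕ) : GaussianInt) * j * h = n then w j else 0) = 0 := by
                rw [ENNReal.tsum_eq_zero]
                intro j; rw [if_neg (hex j)]
              rw [this]; exact zero_le
        _ = ((H.filter (fun h => h ∣ n)).card : ℝ≥0∞) * A := by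
            rw [← Finset.sum_filter, Finset.sum_const, nsmul_eq_mul]
        _ ≤ D * A := by gcongr
        _ = _ := mul_comm _ _
    have key := ih (R * ((m : ℝ) + 2) ^ 2 * L) hR' w' (A * D) hA' hS' hM'
    have heq : ∑' j : GaussianInt, w j * PS.Gd Q0 H (m + 1) ((j : ℂ) * β)
        = ∑' n : GaussianInt, w' n * PS.Gd Q0 H m ((n : ℂ) * β) := by
      simp only [hw', PS.Gd, Finset.mul_sum, Finset.sum_mul]
      rw [Summable.tsum_finsetSum (fun _ _ => ENNReal.summable),
        Summable.tsum_finsetSum (fun _ _ => ENNReal.summable)]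
      refine Finset.sum_congr rfl fun h _ => ?_
      simp_rw [← ENNReal.tsum_mul_right]
      rw [ENNReal.tsum_comm]
      refine tsum_congr fun j => ?_
      rw [tsum_eq_single (((m + 2 : ℕ) : GaussianInt) * j * h)]
      · rw [if_pos rfl]
        congr 2
        simp only [GaussianInt.toComplex_mul, map_natCast]
        push_cast; ring
      · intro n hn
        rw [if_neg (Ne.symm hn), zero_mul]
    rw [heq]
    refine key.trans (le_of_eq ?_)
    rw [pow_succ]; ring

lemma PS.lattice_count {X : ℝ} (hX : 0 ≤ X) :
    ∑' t : GaussianInt, (if gN t ≤ X then (1 : ℝ≥0∞) else 0) ≤ ENNReal.ofReal (exp π * (PS.θ ^ 2 * (2 + X))) := by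
  have ha : 0 < π / (1 + X) := by positivity
  calc _ ≤ ∑' t : GaussianInt, ENNReal.ofReal (exp π) * ENNReal.ofReal (exp (-(π / (1 + X)) * ‖(t : ℂ)‖ ^ 2)) := by
        refine ENNReal.tsum_le_tsum fun t => ?_
        split_ifs with h
        · rw [← ENNReal.ofReal_mul (exp_pos _).le, ← Real.exp_add, ← ENNReal.ofReal_one]
          apply ENNReal.ofReal_le_ofReal
          apply Real.one_le_exp
          rw [← PS.gN_eq]
          have : π / (1 + X) * gN t ≤ π := by
            rw [div_mul_eq_mul_div, div_le_iff₀ (by positivity)]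
            gcongr; linarith
          linarith
        · exact zero_le
    _ ≤ ENNReal.ofReal (exp π) * ENNReal.ofReal (PS.θ ^ 2 * (1 + π / (π / (1 + X)))) := by
        rw [ENNReal.tsum_mul_left]
        gcongr
        exact PS.gauss_enn0 ha
    _ = _ := by
        rw [← ENNReal.ofReal_mul (exp_pos _).le]
        congr 3
        field_simp
        ring

lemma PS.W_sum {Q0 : ℝ} (r Q : GaussianInt) (hQ : Q ≠ 0) (hc : IsCoprime r Q) {Mx : ℝ} (hM : 0 ≤ Mx) :
    ∑' n : GaussianInt, (if gN n ≤ Mx then PS.W Q0 ((n : ℂ) * ((r : ℂ) / (Q : ℂ))) else 0) ≤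
    (∑' t : GaussianInt, (if gN t ≤ 4 * Mx / gN Q then (1 : ℝ≥0∞) else 0)) *
      ∑' b : GaussianInt, ENNReal.ofReal (exp (-(π * Q0 / gN Q) * ‖(b : ℂ)‖ ^ 2)) := by
  have hQc : (Q : ℂ) ≠ 0 := by simpa using hQ
  have hQp := PS.gN_pos hQ
  set g : GaussianInt → ℝ≥0∞ := fun b => ENNReal.ofReal (exp (-(π * Q0 / gN Q) * ‖(b : ℂ)‖ ^ 2)) with hg
  have e1 : ∀ n ν : GaussianInt, ENNReal.ofReal (exp (-(π * Q0) * ‖(ν : ℂ) - (n : ℂ) * ((r : ℂ) / (Q : ℂ))‖ ^ 2))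
      = g (n * r - ν * Q) := by
    intro n ν
    simp only [hg]
    congr 2
    have : ((n * r - ν * Q : GaussianInt) : ℂ) = -(Q : ℂ) * ((ν : ℂ) - (n : ℂ) * ((r : ℂ) / (Q : ℂ))) := by
      simp only [GaussianInt.toComplex_sub, GaussianInt.toComplex_mul]
      field_simp
      ring
    rw [this, norm_mul, norm_neg, mul_pow, ← PS.gN_eq]
    field_simp
  set S : Set (GaussianInt × GaussianInt) := {p | gN p.1 ≤ Mx} with hS
  have e2 : ∑' n : GaussianInt, (if gN n ≤ Mx then PS.W Q0 ((n : ℂ) * ((r : ℂ) / (Q : ℂ))) else 0)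
      = ∑' p : S, g (p.1.1 * r - p.1.2 * Q) := by
    rw [tsum_subtype S (fun p : GaussianInt × GaussianInt => g (p.1 * r - p.2 * Q)), ENNReal.tsum_prod']
    refine tsum_congr fun n => ?_
    split_ifs with h
    · unfold PS.W
      refine tsum_congr fun ν => ?_
      rw [e1, Set.indicator_of_mem]
      exact h
    · symm
      rw [ENNReal.tsum_eq_zero]
      intro ν
      rw [Set.indicator_of_notMem]
      exact h
  have e3 : (∑' t : GaussianInt, (if gN t ≤ 4 * Mx / gN Q then (1 : ℝ≥0∞) else 0)) * ∑' b : GaussianInt, g b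
      = ∑' p : GaussianInt × GaussianInt, (if gN p.2 ≤ 4 * Mx / gN Q then (1 : ℝ≥0∞) else 0) * g p.1 := by
    rw [ENNReal.tsum_prod', ← ENNReal.tsum_mul_left]
    refine tsum_congr fun b => ?_
    rw [← ENNReal.tsum_mul_right]
  rw [e2, e3]
  have hne : Nonempty S := ⟨⟨(0, 0), by simpa [hS, gN] using hM⟩⟩
  set bm : S → GaussianInt := fun p => p.1.1 * r - p.1.2 * Q with hbm
  have hinv : ∀ p, bm (Function.invFun bm (bm p)) = bm p := fun p => Function.invFun_eq ⟨p, rfl⟩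
  have hdiv : ∀ p : S, ∃ t, p.1.1 = (Function.invFun bm (bm p)).1.1 + Q * t := by
    intro p
    have h := hinv p
    have h1 : Q ∣ (p.1.1 - (Function.invFun bm (bm p)).1.1) * r := by
      refine ⟨p.1.2 - (Function.invFun bm (bm p)).1.2, ?_⟩
      simp only [hbm] at h ⊢
      linear_combination -h
    obtain ⟨t, ht⟩ := hc.symm.dvd_of_dvd_mul_right h1
    exact ⟨t, by linear_combination ht⟩
  choose t ht using hdiv
  have hinj : Function.Injective (fun p : S => (bm p, t p)) := by
    intro p p' hpp
    simp only [Prod.mk.injEq] at hpp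
    obtain ⟨h1, h2⟩ := hpp
    have h3 := ht p
    rw [h1, h2, ← ht p'] at h3
    have h4 : p.1.2 = p'.1.2 := by
      simp only [hbm] at h1
      rw [h3] at h1
      exact mul_right_cancel₀ hQ (by linear_combination -h1)
    exact Subtype.ext (Prod.ext h3 h4)
  refine le_trans ?_ (ENNReal.tsum_comp_le_tsum_of_injective hinj _)
  refine ENNReal.tsum_le_tsum fun p => ?_
  have hb : gN (t p) ≤ 4 * Mx / gN Q := by
    rw [le_div_iff₀ hQp, mul_comm, ← PS.gN_mul]
    have h1 : Q * t p = p.1.1 - (Function.invFun bm (bm p)).1.1 := by linear_combination -(ht p)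
    rw [h1]
    have a1 : gN p.1.1 ≤ Mx := p.2
    have a2 : gN (Function.invFun bm (bm p)).1.1 ≤ Mx := (Function.invFun bm (bm p)).2
    generalize (Function.invFun bm (bm p)).1.1 = z at a2
    generalize p.1.1 = y at a1
    unfold gN at *
    rw [Zsqrtd.re_sub, Zsqrtd.im_sub]
    push_cast
    nlinarith [sq_nonneg ((y.re : ℝ) + z.re), sq_nonneg ((y.im : ℝ) + z.im)]
  simp only [hb, if_true, one_mul]
  exact le_rfl


lemma PS.finite_ball (X : ℝ) : {z : GaussianInt | gN z ≤ X}.Finite := by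
  have hf : (Set.Icc (-⌈X⌉) ⌈X⌉ ×ˢ Set.Icc (-⌈X⌉) ⌈X⌉ : Set (ℤ × ℤ)).Finite :=
    (Set.finite_Icc _ _).prod (Set.finite_Icc _ _)
  refine (hf.image PS.eqv).subset ?_
  intro z hz
  refine ⟨(z.re, z.im), ?_, rfl⟩
  have h1 : (z.re ^ 2 + z.im ^ 2 : ℤ) ≤ ⌈X⌉ := by
    have h2 : ((z.re ^ 2 + z.im ^ 2 : ℤ) : ℝ) ≤ ⌈X⌉ := by
      push_cast
      exact le_trans hz (Int.le_ceil X)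
    exact_mod_cast h2
  have ab : ∀ a : ℤ, a ≤ a ^ 2 ∧ -a ≤ a ^ 2 := by
    intro a
    exact ⟨Int.le_self_sq a, by have := Int.le_self_sq (-a); rwa [neg_sq] at this⟩
  have := ab z.re
  have := ab z.im
  have := sq_nonneg z.re
  have := sq_nonneg z.im
  refine ⟨⟨?_, ?_⟩, ⟨?_, ?_⟩⟩ <;> simp only <;> linarith

lemma PS.isUnit_of_gN {p : GaussianInt} (h : gN p = 1) : IsUnit p := by
  rw [← Zsqrtd.norm_eq_one_iff]
  have : p.re ^ 2 + p.im ^ 2 = 1 := by unfold gN at h; exact_mod_cast h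
  have h2 : p.norm = 1 := by rw [Zsqrtd.norm_def]; linarith [sq p.re, sq p.im, this]
  rw [h2]; rfl

lemma PS.two_le_gN {p : GaussianInt} (h0 : p ≠ 0) (hu : ¬ IsUnit p) : 2 ≤ gN p := by
  have h1 := PS.one_le_gN h0
  have h2 : gN p ≠ 1 := fun h => hu (PS.isUnit_of_gN h)
  unfold gN at *
  have h3 : (1 : ℤ) ≤ p.re ^ 2 + p.im ^ 2 := by exact_mod_cast h1
  have h4 : p.re ^ 2 + p.im ^ 2 ≠ (1 : ℤ) := by exact_mod_cast h2
  have : (2 : ℤ) ≤ p.re ^ 2 + p.im ^ 2 := by omega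
  exact_mod_cast this

lemma PS.gN_one : gN 1 = 1 := by simp [gN]

lemma PS.gN_unit {u : GaussianInt} (h : IsUnit u) : gN u = 1 := by
  obtain ⟨v, hv⟩ := h.exists_right_inv
  have h1 : gN u * gN v = 1 := by rw [← PS.gN_mul, hv, PS.gN_one]
  have hu : u ≠ 0 := h.ne_zero
  have hv0 : v ≠ 0 := by rintro rfl; simp at hv
  nlinarith [PS.one_le_gN hu, PS.one_le_gN hv0]

/-- norm as a monoid hom -/
def PS.gNh : GaussianInt →* ℝ where
  toFun := gN
  map_one' := PS.gN_one
  map_mul' := PS.gN_mul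

open UniqueFactorizationMonoid in
open scoped Classical in
lemma PS.divisor_bound {η : ℝ} (hη : 0 < η) : ∃ C : ℝ, 0 < C ∧ ∀ n : GaussianInt, n ≠ 0 →
    ∀ H : Finset GaussianInt, ((H.filter (fun h => h ∣ n)).card : ℝ) ≤ C * gN n ^ η := by
  let _ : StrongNormalizationMonoid GaussianInt := UniqueFactorizationMonoid.strongNormalizationMonoid
  set s : ℝ := 2 ^ η - 1 with hs
  have hspos : 0 < s := by
    have := Real.one_lt_rpow (one_lt_two) hη
    linarith
  set K : ℝ := 1 + 1 / s with hK
  have hK1 : 1 ≤ K := by have : 0 < 1 / s := by positivity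
                         linarith
  set B : ℝ := 2 ^ (1 / η) with hB
  set T := (PS.finite_ball B).toFinset with hT
  refine ⟨9 * K ^ T.card, by positivity, ?_⟩
  intro n hn H
  set F := normalizedFactors n with hF
  have hcard : (H.filter (fun h => h ∣ n)).card ≤ (Finset.Iic F).card * 9 := by
    have hex : ∀ d : GaussianInt, ∃ u : GaussianInt, d ∣ n → (gN u = 1 ∧ d = (normalizedFactors d).prod * u) := by
      intro d
      by_cases hd : d ∣ n
      · have hd0 : d ≠ 0 := ne_zero_of_dvd_ne_zero hn hd
        obtain ⟨u, hu⟩ := prod_normalizedFactors hd0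
        exact ⟨u, fun _ => ⟨PS.gN_unit u.isUnit, hu.symm⟩⟩
      · exact ⟨0, fun h => absurd h hd⟩
    choose u hu using hex
    have h9 : ((Finset.Icc (-1 : ℤ) 1) ×ˢ (Finset.Icc (-1 : ℤ) 1)).card = 9 := by decide
    rw [← h9, ← Finset.card_product]
    refine Finset.card_le_card_of_injOn (fun d => (normalizedFactors d, ((u d).re, (u d).im))) ?_ ?_
    · intro d hd
      have hd' : d ∣ n := (Finset.mem_filter.1 hd).2
      have hd0 : d ≠ 0 := ne_zero_of_dvd_ne_zero hn hd'
      obtain ⟨h1, _⟩ := hu d hd'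
      have h2 : (u d).re ^ 2 + (u d).im ^ 2 = (1 : ℤ) := by unfold gN at h1; exact_mod_cast h1
      simp only [Finset.coe_product, Set.mem_prod, Finset.mem_coe, Finset.mem_Iic, Finset.mem_Icc]
      refine ⟨(dvd_iff_normalizedFactors_le_normalizedFactors hd0 hn).1 hd', ?_, ?_⟩
      · rw [← abs_le, ← sq_le_one_iff_abs_le_one]
        nlinarith [sq_nonneg (u d).im]
      · rw [← abs_le, ← sq_le_one_iff_abs_le_one]
        nlinarith [sq_nonneg (u d).re]
    · intro d hd d' hd' hdd
      have k1 := (hu d (Finset.mem_filter.1 hd).2).2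
      have k2 := (hu d' (Finset.mem_filter.1 hd').2).2
      simp only [Prod.mk.injEq] at hdd
      obtain ⟨a1, a2, a3⟩ := hdd
      have a4 : u d = u d' := Zsqrtd.ext a2 a3
      rw [k1, k2, a1, a4]
  have hprod : gN n = ∏ p ∈ F.toFinset, gN p ^ F.count p := by
    obtain ⟨u, hu⟩ := prod_normalizedFactors hn
    rw [← hu, PS.gN_mul, PS.gN_unit u.isUnit, mul_one, ← hF, Finset.prod_multiset_count]
    exact (map_prod PS.gNh _ _).trans (Finset.prod_congr rfl fun p _ => map_pow PS.gNh _ _)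
  have hprodη : gN n ^ η = ∏ p ∈ F.toFinset, (gN p ^ η) ^ F.count p := by
    rw [hprod, ← Real.finsetProd_rpow _ _ (fun p _ => by have := PS.gN_nonneg p; positivity)]
    refine Finset.prod_congr rfl fun p _ => ?_
    rw [← Real.rpow_natCast, ← Real.rpow_natCast, ← Real.rpow_mul (PS.gN_nonneg p),
      ← Real.rpow_mul (PS.gN_nonneg p), mul_comm]
  have hpt : ∀ p ∈ F.toFinset, ((F.count p : ℝ) + 1) ≤ (if p ∈ T then K else 1) * (gN p ^ η) ^ F.count p := by
    intro p hp
    have hp' : p ∈ normalizedFactors n := Multiset.mem_toFinset.1 hp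
    have hpr := prime_of_normalized_factor p hp'
    have h2 := PS.two_le_gN hpr.ne_zero hpr.not_isUnit
    split_ifs with hpT
    · have hb : 1 + s ≤ gN p ^ η := by
        have : (2 : ℝ) ^ η ≤ gN p ^ η := Real.rpow_le_rpow (by norm_num) h2 hη.le
        linarith
      have h3 := one_add_mul_le_pow (a := s) (by linarith) (F.count p)
      have h4 : (1 + s) ^ F.count p ≤ (gN p ^ η) ^ F.count p := by gcongr
      have h5 : ((F.count p : ℝ) + 1) ≤ K * (1 + F.count p * s) := by
        have : K * (1 + F.count p * s) = 1 + 1 / s + F.count p * s + F.count p := by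
          rw [hK]; field_simp; ring
        rw [this]
        have : 0 < 1 / s := by positivity
        have : 0 ≤ F.count p * s := by positivity
        linarith
      refine h5.trans ?_
      gcongr
      exact h3.trans h4
    · have hB' : B < gN p := by
        by_contra hcon
        exact hpT (by rw [hT, Set.Finite.mem_toFinset]; exact not_lt.1 hcon)
      have h6 : (2 : ℝ) ≤ gN p ^ η := by
        have : B ^ η ≤ gN p ^ η := Real.rpow_le_rpow (by positivity) hB'.le hη.le
        rwa [hB, ← Real.rpow_mul (by norm_num), one_div_mul_cancel hη.ne', Real.rpow_one] at this
      rw [one_mul]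
      have h7 : ((F.count p : ℝ) + 1) ≤ 2 ^ F.count p := by
        have : F.count p + 1 ≤ 2 ^ F.count p := Nat.lt_two_pow_self
        exact_mod_cast this
      refine h7.trans ?_
      gcongr
  have hIic : ((Finset.Iic F).card : ℝ) ≤ K ^ T.card * gN n ^ η := by
    rw [Multiset.card_Iic, hprodη]
    push_cast
    refine (Finset.prod_le_prod (fun p _ => by positivity) hpt).trans ?_
    rw [Finset.prod_mul_distrib]
    have hx : ∏ p ∈ F.toFinset, (if p ∈ T then K else 1) ≤ K ^ T.card := by
      rw [← Finset.prod_filter, Finset.prod_const]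
      apply pow_le_pow_right₀ hK1
      apply Finset.card_le_card
      intro p hp
      exact (Finset.mem_filter.1 hp).2
    have hy : 0 ≤ ∏ p ∈ F.toFinset, (gN p ^ η) ^ F.count p :=
      Finset.prod_nonneg fun p _ => by have := PS.gN_nonneg p; positivity
    gcongr
  calc ((H.filter (fun h => h ∣ n)).card : ℝ) ≤ ((Finset.Iic F).card : ℝ) * 9 := by exact_mod_cast hcard
    _ ≤ (K ^ T.card * gN n ^ η) * 9 := by gcongr
    _ = _ := by ring


lemma PS.Sk_bound {m : ℕ} {Q0 : ℝ} (hQ : 0 < Q0) (q1 r1 j : GaussianInt) (u : GaussianInt → ℝ≥0∞)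
    (hu : ∀ h, u h = ENNReal.ofReal (exp (-(π / (2 ^ (m + 1) * Q0)) * ‖(h : ℂ)‖ ^ 2)))
    (K : ℝ≥0∞) (hK : ∑' h, u h ≤ K) :
    ‖Sk (m + 1) Q0 q1 r1 j‖ₑ ^ (2 ^ m) ≤ ENNReal.ofReal Q0 * K ^ (2 ^ m - (m + 1)) *
      PS.F Q0 u m ((j : ℂ) * ((r1 : ℂ) / ((q1 ^ (m + 1) : GaussianInt) : ℂ))) := by
  have h := PS.weyl_iter hQ u hu K hK m le_rfl 0
    (Polynomial.C ((j : ℂ) * ((r1 : ℂ) / ((q1 ^ (m + 1) : GaussianInt) : ℂ))) * Polynomial.X ^ (m + 1))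
    (Polynomial.natDegree_C_mul_X_pow_le _ _)
  rw [Polynomial.coeff_C_mul_X_pow, if_pos rfl] at h
  convert h using 3
  unfold Sk PS.T
  refine tsum_congr fun q => ?_
  congr 2
  · rw [PS.gN_eq, sub_zero, Nat.add_sub_cancel]
    congr 1
    ring_nf
  · simp only [Polynomial.eval_mul, Polynomial.eval_C, Polynomial.eval_pow, Polynomial.eval_X,
      map_pow]
    congr 1
    ring

open scoped Classical in
lemma PS.core {m : ℕ} {Q0 L R Mx Dr Kb : ℝ} (hQ : 1 ≤ Q0) (hL : 1 ≤ L) (hR : 0 ≤ R)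
    (q1 r1 : GaussianInt) (hq : q1 ≠ 0) (hc : IsCoprime r1 q1) (H J : Finset GaussianInt)
    (hH : ∀ h ∈ H, h ≠ 0 ∧ gN h ≤ L) (hJ : ∀ j ∈ J, j ≠ 0 ∧ gN j ≤ R)
    (hMx : R * ((m + 1).factorial : ℝ) ^ 2 * L ^ m ≤ Mx) (hD0 : 0 ≤ Dr) (hKb : 0 ≤ Kb)
    (hD : ∀ n : GaussianInt, n ≠ 0 → gN n ≤ Mx → ((H.filter (fun h => h ∣ n)).card : ℝ) ≤ Dr)
    (hKB : ∑' h : GaussianInt, (if h ∈ H then 0 else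
      ENNReal.ofReal (exp (-(π / (2 ^ (m + 1) * Q0)) * ‖(h : ℂ)‖ ^ 2))) ≤ ENNReal.ofReal Kb) :
    ∑ j ∈ J, ‖Sk (m + 1) Q0 q1 r1 j‖ ^ (2 ^ m) ≤
      Q0 * (PS.θ ^ 2 * (1 + 2 ^ (m + 1) * Q0)) ^ (2 ^ m - (m + 1)) *
      (J.card * (m * Kb * (PS.θ ^ 2 * (1 + 2 ^ (m + 1) * Q0)) ^ (m - 1) * (2 * PS.θ ^ 2))
        + Dr ^ m * (exp π * (PS.θ ^ 2 * (2 + 4 * Mx / gN (q1 ^ (m + 1)))) *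
          (PS.θ ^ 2 * (1 + gN (q1 ^ (m + 1)) / Q0)))) := by
  have hQ0 : 0 < Q0 := by linarith
  have hθ := PS.θ_pos
  have hM0 : 0 ≤ Mx := le_trans (by positivity) hMx
  have hQq : (q1 ^ (m + 1) : GaussianInt) ≠ 0 := pow_ne_zero _ hq
  have hgq := PS.gN_pos hQq
  set Kr : ℝ := PS.θ ^ 2 * (1 + 2 ^ (m + 1) * Q0) with hKr
  have hKr0 : 0 ≤ Kr := by positivity
  set u : GaussianInt → ℝ≥0∞ := fun h =>
    ENNReal.ofReal (exp (-(π / (2 ^ (m + 1) * Q0)) * ‖(h : ℂ)‖ ^ 2)) with hu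
  set β : ℂ := (r1 : ℂ) / ((q1 ^ (m + 1) : GaussianInt) : ℂ) with hβ
  have hK : ∑' h, u h ≤ ENNReal.ofReal Kr := by
    refine (PS.gauss_enn0 (a := π / (2 ^ (m + 1) * Q0)) (by positivity)).trans (le_of_eq ?_)
    congr 3
    field_simp
  have hu1 : ∀ h, u h ≤ 1 := by
    intro h
    rw [hu]
    simp only [ENNReal.ofReal_le_one]
    rw [exp_le_one_iff]
    have : 0 ≤ π / (2 ^ (m + 1) * Q0) * ‖(h : ℂ)‖ ^ 2 := by positivity
    linarith
  have hFG := PS.F_le_G (Q0 := Q0) u (ENNReal.ofReal Kr) (ENNReal.ofReal Kb) (ENNReal.ofReal (2 * PS.θ ^ 2)) hK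
    hu1 H hKB (PS.W_le hQ) m
  have hG : ∑ j ∈ J, PS.Gd Q0 H m ((j : ℂ) * β) ≤ ENNReal.ofReal (Dr ^ m *
      (exp π * (PS.θ ^ 2 * (2 + 4 * Mx / gN (q1 ^ (m + 1)))) *
          (PS.θ ^ 2 * (1 + gN (q1 ^ (m + 1)) / Q0)))) := by
    have h1 := PS.G_sum (Q0 := Q0) β H (ENNReal.ofReal Dr) L Mx hL hH (by
      intro n hn hn2
      rw [← ENNReal.ofReal_natCast]
      exact ENNReal.ofReal_le_ofReal (hD n hn hn2)) m R hR (fun j => if j ∈ J then 1 else 0) 1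
      (by intro n; split_ifs <;> simp) (by
        intro n hn
        exact hJ n (by by_contra h; simp [h] at hn)) hMx
    have h2 : ∑' j : GaussianInt, (if j ∈ J then (1 : ℝ≥0∞) else 0) * PS.Gd Q0 H m ((j : ℂ) * β) =
        ∑ j ∈ J, PS.Gd Q0 H m ((j : ℂ) * β) := by
      rw [tsum_eq_sum (s := J)]
      · exact Finset.sum_congr rfl fun j hj => by simp [hj]
      · intro j hj; simp [hj]
    rw [h2] at h1
    refine h1.trans ?_
    rw [one_mul, ENNReal.ofReal_mul (by positivity), ENNReal.ofReal_pow hD0]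
    gcongr
    refine (PS.W_sum r1 _ hQq hc.pow_right hM0).trans ?_
    rw [ENNReal.ofReal_mul (by positivity)]
    gcongr
    · exact PS.lattice_count (by positivity)
    · refine (PS.gauss_enn0 (by positivity)).trans (le_of_eq ?_)
      congr 3
      field_simp
  have hmain : ∑ j ∈ J, ‖Sk (m + 1) Q0 q1 r1 j‖ₑ ^ (2 ^ m) ≤
      ENNReal.ofReal (Q0 * Kr ^ (2 ^ m - (m + 1)) *
      (J.card * (m * Kb * Kr ^ (m - 1) * (2 * PS.θ ^ 2))
        + Dr ^ m * (exp π * (PS.θ ^ 2 * (2 + 4 * Mx / gN (q1 ^ (m + 1)))) *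
          (PS.θ ^ 2 * (1 + gN (q1 ^ (m + 1)) / Q0))))) := by
    calc _ ≤ ∑ j ∈ J, ENNReal.ofReal Q0 * ENNReal.ofReal Kr ^ (2 ^ m - (m + 1)) *
            ((m * ENNReal.ofReal Kb * ENNReal.ofReal Kr ^ (m - 1) * ENNReal.ofReal (2 * PS.θ ^ 2)) + PS.Gd Q0 H m ((j : ℂ) * β)) := by
          refine Finset.sum_le_sum fun j _ => ?_
          refine (PS.Sk_bound hQ0 q1 r1 j u (fun _ => rfl) _ hK).trans ?_
          gcongr
          exact hFG _
      _ = ENNReal.ofReal Q0 * ENNReal.ofReal Kr ^ (2 ^ m - (m + 1)) *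
            (J.card * (m * ENNReal.ofReal Kb * ENNReal.ofReal Kr ^ (m - 1) * ENNReal.ofReal (2 * PS.θ ^ 2)) + ∑ j ∈ J, PS.Gd Q0 H m ((j : ℂ) * β)) := by
          rw [← Finset.mul_sum, Finset.sum_add_distrib, Finset.sum_const, nsmul_eq_mul]
      _ ≤ _ := by
          have hw : (0 : ℝ) ≤ 2 * PS.θ ^ 2 := by positivity
          have e1 : ENNReal.ofReal (J.card * (m * Kb * Kr ^ (m - 1) * (2 * PS.θ ^ 2))) =
              J.card * (m * ENNReal.ofReal Kb * ENNReal.ofReal Kr ^ (m - 1) * ENNReal.ofReal (2 * PS.θ ^ 2)) := by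
            generalize 2 * PS.θ ^ 2 = c2 at hw
            clear_value Kr
            rw [ENNReal.ofReal_mul (by positivity), ENNReal.ofReal_mul (by positivity),
              ENNReal.ofReal_mul (by positivity), ENNReal.ofReal_mul (by positivity), ENNReal.ofReal_pow hKr0,
              ENNReal.ofReal_natCast, ENNReal.ofReal_natCast]
          have hp : 0 ≤ Q0 * Kr ^ (2 ^ m - (m + 1)) := by positivity
          rw [ENNReal.ofReal_mul hp, ENNReal.ofReal_add (by positivity) (by positivity), e1,
            ENNReal.ofReal_mul hQ0.le, ENNReal.ofReal_pow hKr0]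
          exact mul_le_mul_right (add_le_add_right hG _) _
  rw [← ENNReal.ofReal_le_ofReal_iff (by positivity), ENNReal.ofReal_sum_of_nonneg (fun _ _ => by positivity)]
  refine le_trans (le_of_eq ?_) hmain
  refine Finset.sum_congr rfl fun j _ => ?_
  rw [ENNReal.ofReal_pow (norm_nonneg _), ofReal_norm]


lemma PS.exp_tail {a b δ : ℝ} (ha : 0 < a) (hb : 0 < b) (hδ : 0 < δ) : ∃ M : ℝ, 0 ≤ M ∧ ∀ x : ℝ, 1 ≤ x →
    exp (-(a * x ^ δ)) * (1 + b * x) ≤ M := by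
  obtain ⟨n, hn⟩ := exists_nat_ge (1 / δ)
  refine ⟨n.factorial / a ^ n * (1 + b), by positivity, ?_⟩
  intro x hx
  have hx0 : 0 < x := by linarith
  have h1 : x ≤ (x ^ δ) ^ n := by
    rw [← Real.rpow_natCast, ← Real.rpow_mul hx0.le]
    calc x = x ^ (1 : ℝ) := (Real.rpow_one x).symm
      _ ≤ _ := Real.rpow_le_rpow_of_exponent_le hx (by
        rw [div_le_iff₀ hδ] at hn; linarith)
  have h2 : (a * x ^ δ) ^ n / n.factorial ≤ exp (a * x ^ δ) := Real.pow_div_factorial_le_exp _ (by positivity) n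
  have h3 : a ^ n * x / n.factorial ≤ exp (a * x ^ δ) := by
    refine le_trans ?_ h2
    rw [mul_pow]
    gcongr
  have h4 : 1 + b * x ≤ (1 + b) * x := by nlinarith
  rw [Real.exp_neg, inv_mul_le_iff₀ (exp_pos _)]
  calc 1 + b * x ≤ (1 + b) * x := h4
    _ = a ^ n * x / n.factorial * (n.factorial / a ^ n * (1 + b)) := by
      have : (n.factorial : ℝ) ≠ 0 := by positivity
      field_simp
    _ ≤ _ := by gcongr

open scoped Classical in
lemma PS.tail (m : ℕ) {δ : ℝ} (hδ : 0 < δ) : ∃ Kb : ℝ, 0 ≤ Kb ∧ ∀ Q0 : ℝ, 1 ≤ Q0 → ∀ H : Finset GaussianInt,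
    (∀ h : GaussianInt, h ≠ 0 → gN h ≤ Q0 ^ (1 + δ) → h ∈ H) →
    ∑' h : GaussianInt, (if h ∈ H then 0 else
      ENNReal.ofReal (exp (-(π / (2 ^ (m + 1) * Q0)) * ‖(h : ℂ)‖ ^ 2))) ≤ ENNReal.ofReal Kb := by
  obtain ⟨M, hM0, hM⟩ := PS.exp_tail (a := π / 2 ^ (m + 2)) (b := 2 ^ (m + 2)) (δ := δ) (by positivity) (by positivity) hδ
  have hθ := PS.θ_pos
  refine ⟨1 + PS.θ ^ 2 * M, by positivity, ?_⟩
  intro Q0 hQ H hH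
  have hQ0 : 0 < Q0 := by linarith
  set E : ℝ := exp (-(π / 2 ^ (m + 2) * Q0 ^ δ)) with hE
  have hpt : ∀ h : GaussianInt, (if h ∈ H then 0 else
      ENNReal.ofReal (exp (-(π / (2 ^ (m + 1) * Q0)) * ‖(h : ℂ)‖ ^ 2))) ≤
      (if h = 0 then 1 else 0) + ENNReal.ofReal E * ENNReal.ofReal (exp (-(π / (2 ^ (m + 2) * Q0)) * ‖(h : ℂ)‖ ^ 2)) := by
    intro h
    split_ifs with h1 h2 h2
    · simp
    · simp
    · subst h2
      simp
    · rw [zero_add, ← ENNReal.ofReal_mul (exp_pos _).le]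
      apply ENNReal.ofReal_le_ofReal
      rw [← Real.exp_add, Real.exp_le_exp]
      have h3 : Q0 ^ (1 + δ) < gN h := by
        by_contra hc
        exact h1 (hH h h2 (not_lt.1 hc))
      rw [PS.gN_eq, Real.rpow_add hQ0, Real.rpow_one] at h3
      have h4 : π / 2 ^ (m + 2) * Q0 ^ δ ≤ π / (2 ^ (m + 2) * Q0) * ‖(h : ℂ)‖ ^ 2 := by
        calc π / 2 ^ (m + 2) * Q0 ^ δ = π / (2 ^ (m + 2) * Q0) * (Q0 * Q0 ^ δ) := by field_simp
          _ ≤ _ := by gcongr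
      have h5 : π / (2 ^ (m + 1) * Q0) = 2 * (π / (2 ^ (m + 2) * Q0)) := by
        rw [pow_succ 2 (m + 1)]
        field_simp
      rw [h5]
      linarith
  refine (ENNReal.tsum_le_tsum hpt).trans ?_
  rw [ENNReal.tsum_add, tsum_ite_eq, ENNReal.tsum_mul_left, ENNReal.ofReal_add (by norm_num) (by positivity),
    ENNReal.ofReal_one]
  gcongr
  refine (mul_le_mul_right (PS.gauss_enn0 (by positivity)) _).trans ?_
  rw [← ENNReal.ofReal_mul (exp_pos _).le]
  apply ENNReal.ofReal_le_ofReal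
  have e1 : π / (π / (2 ^ (m + 2) * Q0)) = 2 ^ (m + 2) * Q0 := by field_simp
  rw [e1]
  calc E * (PS.θ ^ 2 * (1 + 2 ^ (m + 2) * Q0)) = PS.θ ^ 2 * (E * (1 + 2 ^ (m + 2) * Q0)) := by ring
    _ ≤ _ := by gcongr; exact hM Q0 hQ

lemma PS.card_J {R : ℝ} (J : Finset GaussianInt) (hR : 0 ≤ R) (hJ : ∀ j ∈ J, j ≠ 0 ∧ gN j ≤ R) :
    (J.card : ℝ) ≤ 3 * exp π * PS.θ ^ 2 * R := by
  have hθ := PS.θ_pos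
  rcases J.eq_empty_or_nonempty with rfl | ⟨j, hj⟩
  · simp; positivity
  have h1 : 1 ≤ R := (PS.one_le_gN (hJ j hj).1).trans (hJ j hj).2
  have h2 : (J.card : ℝ≥0∞) ≤ ENNReal.ofReal (exp π * (PS.θ ^ 2 * (2 + R))) := by
    refine le_trans ?_ (PS.lattice_count hR)
    refine le_trans ?_ (ENNReal.sum_le_tsum J)
    rw [Finset.sum_congr rfl (g := fun _ => (1 : ℝ≥0∞)) (fun j hj => if_pos (hJ j hj).2)]
    simp
  rw [← ENNReal.ofReal_natCast, ENNReal.ofReal_le_ofReal_iff (by positivity)] at h2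
  refine h2.trans ?_
  have : 0 < exp π * PS.θ ^ 2 := by positivity
  nlinarith

/-- elementary comparison of powers -/
lemma PS.pow_compare {N Q0 ε k : ℝ} (hN : 2 ≤ N) (hQ : 2 ≤ Q0) (hε : 0 < ε) (hε1 : ε < 1) (hk : 2 ≤ k) :
    (Q0 * N) ^ (ε / 4) * (1 + N * Q0 ^ (-1 - k + 5 * ε / 4)) ≤
      2 * ((Q0 * N) ^ ε * (1 + N * Q0 ^ (-1 - k))) := by
  have hQ0 : 0 < Q0 := by linarith
  have hN0 : 0 < N := by linarith
  have hP : 1 ≤ Q0 * N := by nlinarith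
  have h1 : (Q0 * N) ^ (ε / 4) ≤ (Q0 * N) ^ ε := Real.rpow_le_rpow_of_exponent_le hP (by linarith)
  have hE : 0 < (Q0 * N) ^ ε := by positivity
  have hZ : 0 < Q0 ^ (-1 - k) := by positivity
  rcases le_total Q0 N with h | h
  · have h2 : Q0 ^ (5 * ε / 4) ≤ (Q0 * N) ^ (5 * ε / 8) := by
      calc Q0 ^ (5 * ε / 4) = (Q0 * Q0) ^ (5 * ε / 8) := by
            rw [Real.mul_rpow hQ0.le hQ0.le, ← Real.rpow_add hQ0]; congr 1; ring
        _ ≤ _ := Real.rpow_le_rpow (by positivity) (by gcongr) (by positivity)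
    have h3 : (Q0 * N) ^ (ε / 4) * Q0 ^ (5 * ε / 4) ≤ (Q0 * N) ^ ε := by
      calc _ ≤ (Q0 * N) ^ (ε / 4) * (Q0 * N) ^ (5 * ε / 8) := by gcongr
        _ = (Q0 * N) ^ (ε / 4 + 5 * ε / 8) := (Real.rpow_add (by linarith) _ _).symm
        _ ≤ _ := Real.rpow_le_rpow_of_exponent_le hP (by linarith)
    rw [Real.rpow_add hQ0]
    calc _ = (Q0 * N) ^ (ε / 4) + N * Q0 ^ (-1 - k) * ((Q0 * N) ^ (ε / 4) * Q0 ^ (5 * ε / 4)) := by ring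
      _ ≤ (Q0 * N) ^ ε + N * Q0 ^ (-1 - k) * (Q0 * N) ^ ε := by gcongr
      _ = (Q0 * N) ^ ε * (1 + N * Q0 ^ (-1 - k)) := by ring
      _ ≤ _ := by
        have : 0 < (Q0 * N) ^ ε * (1 + N * Q0 ^ (-1 - k)) := by positivity
        linarith
  · have h2 : N * Q0 ^ (-1 - k + 5 * ε / 4) ≤ 1 := by
      calc _ ≤ Q0 ^ (1 : ℝ) * Q0 ^ (-1 - k + 5 * ε / 4) := by rw [Real.rpow_one]; gcongr
        _ = Q0 ^ (-k + 5 * ε / 4) := by rw [← Real.rpow_add hQ0]; congr 1; ring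
        _ ≤ 1 := Real.rpow_le_one_of_one_le_of_nonpos (by linarith) (by linarith)
    calc _ ≤ (Q0 * N) ^ ε * (1 + 1) := by gcongr
      _ ≤ _ := by
        have : 0 < (Q0 * N) ^ ε * (N * Q0 ^ (-1 - k)) := by positivity
        linarith

set_option maxHeartbeats 1000000 in
lemma PS.main (m : ℕ) (hm : 1 ≤ m) (ε : ℝ) (hε : 0 < ε) (hε1 : ε < 1) : ∃ C : ℝ, 0 < C ∧
      ∀ (N Q0 : ℝ), 2 ≤ N → 2 ≤ Q0 →
      ∀ q1 : GaussianInt, Q0 ^ (m + 1) / 2 < gN (q1 ^ (m + 1)) → gN (q1 ^ (m + 1)) ≤ Q0 ^ (m + 1) →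
      ∀ r1 : GaussianInt, IsCoprime r1 q1 → ∀ J : Finset GaussianInt,
      (∀ j ∈ J, j ≠ 0 ∧ gN j ≤ N * Q0 ^ (ε - ((m + 1 : ℕ) : ℝ))) →
      ∑ j ∈ J, ‖Sk (m + 1) Q0 q1 r1 j‖ ^ (2 ^ m) ≤
        C * ((Q0 * N) ^ ε * (Q0 ^ (2 ^ m) * (1 + N * Q0 ^ (-1 - ((m + 1 : ℕ) : ℝ))))) := by
  classical
  have hθ := PS.θ_pos
  have hm0 : (0 : ℝ) < m := by exact_mod_cast hm
  set η : ℝ := ε / (4 * m) with hη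
  have hη0 : 0 < η := by positivity
  have hηm : η * m = ε / 4 := by rw [hη]; field_simp
  obtain ⟨Kb, hKb0, hKb⟩ := PS.tail m hη0
  obtain ⟨Cd, hCd0, hCd⟩ := PS.divisor_bound hη0
  set f : ℝ := ((m + 1).factorial : ℝ) ^ 2 with hf
  have hf1 : 1 ≤ f := by
    have : (1 : ℝ) ≤ ((m + 1).factorial : ℝ) := by exact_mod_cast Nat.one_le_iff_ne_zero.2 (Nat.factorial_ne_zero _)
    exact one_le_pow₀ this
  set c1 : ℝ := PS.θ ^ 2 * (1 + 2 ^ (m + 1)) with hc1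
  have hc10 : 0 < c1 := by positivity
  set A1 : ℝ := c1 ^ (2 ^ m - (m + 1)) * (3 * exp π * PS.θ ^ 2 * (m * Kb * c1 ^ (m - 1) * (2 * PS.θ ^ 2))) with hA1
  set A2 : ℝ := c1 ^ (2 ^ m - (m + 1)) * (Cd ^ m * f ^ (ε / 4) * (exp π * (PS.θ ^ 2 * (8 * f)) * (PS.θ ^ 2 * 2))) with hA2
  have hA10 : 0 ≤ A1 := by positivity
  have hA20 : 0 < A2 := by positivity
  refine ⟨A1 + 2 * A2, by positivity, ?_⟩
  intro N Q0 hN hQ q1 hg1 hg2 r1 hc J hJ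
  have hQ0 : 0 < Q0 := by linarith
  have hN0 : 0 < N := by linarith
  have hQ1 : 1 ≤ Q0 := by linarith
  have hP1 : 1 ≤ Q0 * N := by nlinarith
  set g := gN (q1 ^ (m + 1)) with hg
  have hg0 : 0 < g := lt_of_le_of_lt (by positivity) hg1
  have hq : q1 ≠ 0 := by
    rintro rfl
    rw [hg, zero_pow (by omega)] at hg0
    simp [gN] at hg0
  set R : ℝ := N * Q0 ^ (ε - ((m + 1 : ℕ) : ℝ)) with hR
  have hR0 : 0 < R := by positivity
  set L : ℝ := Q0 ^ (1 + η) with hL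
  have hL1 : 1 ≤ L := Real.one_le_rpow hQ1 (by linarith)
  set H : Finset GaussianInt := (PS.finite_ball L).toFinset.filter (fun h => h ≠ 0) with hHdef
  have hHm : ∀ h, h ∈ H ↔ h ≠ 0 ∧ gN h ≤ L := by
    intro h
    rw [hHdef, Finset.mem_filter, Set.Finite.mem_toFinset, and_comm]; rfl
  set Mx : ℝ := f * (N * Q0 ^ (-1 + 5 * ε / 4)) with hMx
  have hMxeq : R * ((m + 1).factorial : ℝ) ^ 2 * L ^ m = Mx := by
    have : Q0 ^ (ε - ((m + 1 : ℕ) : ℝ)) * L ^ m = Q0 ^ (-1 + 5 * ε / 4) := by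
      rw [hL, ← Real.rpow_natCast (Q0 ^ (1 + η)) m, ← Real.rpow_mul hQ0.le, ← Real.rpow_add hQ0]
      congr 1
      push_cast
      linear_combination hηm
    rw [hMx, ← this, hR, hf]; ring
  have hMx0 : 0 < Mx := by positivity
  have hMxle : Mx ≤ f * (Q0 * N) := by
    rw [hMx, mul_comm Q0 N]
    have : Q0 ^ (-1 + 5 * ε / 4) ≤ Q0 := by
      calc _ ≤ Q0 ^ (1 : ℝ) := Real.rpow_le_rpow_of_exponent_le hQ1 (by linarith)
        _ = Q0 := Real.rpow_one _
    gcongr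
  set D : ℝ := Cd * (f * (Q0 * N)) ^ η with hD
  have hD0 : 0 ≤ D := by positivity
  have hDm : D ^ m = Cd ^ m * f ^ (ε / 4) * (Q0 * N) ^ (ε / 4) := by
    rw [hD, mul_pow, ← Real.rpow_natCast ((f * (Q0 * N)) ^ η) m, ← Real.rpow_mul (by positivity), hηm,
      Real.mul_rpow (by positivity) (by positivity)]
    ring
  have hcore := PS.core (m := m) (Dr := D) hQ1 hL1 hR0.le q1 r1 hq hc H J (fun h hh => (hHm h).1 hh) hJ hMxeq.le hD0 hKb0
    (by
      intro n hn hn2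
      refine (hCd n hn H).trans ?_
      rw [hD]
      have := PS.gN_nonneg n
      gcongr
      exact hn2.trans hMxle)
    (hKb Q0 hQ1 H (fun h h0 h1 => (hHm h).2 ⟨h0, h1⟩))
  rw [← hg] at hcore
  refine hcore.trans ?_
  have hK : PS.θ ^ 2 * (1 + 2 ^ (m + 1) * Q0) ≤ c1 * Q0 := by
    rw [hc1, mul_assoc]
    have : 1 + 2 ^ (m + 1) * Q0 ≤ (1 + 2 ^ (m + 1)) * Q0 := by linarith
    gcongr
  have hmP : m + 1 ≤ 2 ^ m := Nat.lt_two_pow_self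
  have hJc := PS.card_J J hR0.le hJ
  have b1 : 2 + 4 * Mx / g ≤ 8 * f * (1 + N * Q0 ^ (-1 - ((m + 1 : ℕ) : ℝ) + 5 * ε / 4)) := by
    have h1 : Mx / g ≤ 2 * (f * (N * Q0 ^ (-1 - ((m + 1 : ℕ) : ℝ) + 5 * ε / 4))) := by
      rw [div_le_iff₀ hg0]
      have h2 : Q0 ^ (-1 - ((m + 1 : ℕ) : ℝ) + 5 * ε / 4) * Q0 ^ (m + 1) = Q0 ^ (-1 + 5 * ε / 4) := by
        rw [← Real.rpow_natCast Q0 (m + 1), ← Real.rpow_add hQ0]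
        congr 1; ring
      calc Mx = 2 * (f * (N * Q0 ^ (-1 - ((m + 1 : ℕ) : ℝ) + 5 * ε / 4))) * (Q0 ^ (m + 1) / 2) := by
            rw [hMx, ← h2]; ring
        _ ≤ _ := by gcongr
    have h3 : 4 * Mx / g = 4 * (Mx / g) := by ring
    rw [h3]
    nlinarith
  have b2 : 1 + g / Q0 ≤ 2 * Q0 ^ m := by
    have h1 : g / Q0 ≤ Q0 ^ m := by
      rw [div_le_iff₀ hQ0, ← pow_succ]; exact hg2
    have h2 : 1 ≤ Q0 ^ m := one_le_pow₀ hQ1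
    linarith
  set Y : ℝ := N * Q0 ^ (-1 - ((m + 1 : ℕ) : ℝ) + 5 * ε / 4) with hY
  have hY0 : 0 < Y := by positivity
  clear_value A1 A2 Y R D Mx g
  calc _ ≤ Q0 * (c1 * Q0) ^ (2 ^ m - (m + 1)) *
      ((3 * exp π * PS.θ ^ 2 * R) * (m * Kb * (c1 * Q0) ^ (m - 1) * (2 * PS.θ ^ 2))
        + D ^ m * (exp π * (PS.θ ^ 2 * (8 * f * (1 + Y))) *
          (PS.θ ^ 2 * (2 * Q0 ^ m)))) := by gcongr
    _ = A1 * (Q0 * Q0 ^ (2 ^ m - (m + 1)) * Q0 ^ (m - 1) * R) +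
        A2 * (Q0 * Q0 ^ (2 ^ m - (m + 1)) * Q0 ^ m * ((Q0 * N) ^ (ε / 4) * (1 + Y))) := by
      rw [hDm, hA1, hA2, mul_pow, mul_pow]; ring
    _ ≤ A1 * ((Q0 * N) ^ ε * (Q0 ^ (2 ^ m) * (1 + N * Q0 ^ (-1 - ((m + 1 : ℕ) : ℝ))))) +
        A2 * (2 * ((Q0 * N) ^ ε * (Q0 ^ (2 ^ m) * (1 + N * Q0 ^ (-1 - ((m + 1 : ℕ) : ℝ)))))) := by
      have p2 : Q0 * Q0 ^ (2 ^ m - (m + 1)) * Q0 ^ m = Q0 ^ (2 ^ m) := by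
        rw [← pow_succ', ← pow_add]; congr 1; omega
      have p1 : Q0 * Q0 ^ (2 ^ m - (m + 1)) * Q0 ^ (m - 1) * R = Q0 ^ (2 ^ m) * (Q0 ^ ε * (N * Q0 ^ (-1 - ((m + 1 : ℕ) : ℝ)))) := by
        have h1 : Q0 ^ ε * Q0 ^ (-1 - ((m + 1 : ℕ) : ℝ)) * Q0 = Q0 ^ (ε - ((m + 1 : ℕ) : ℝ)) := by
          rw [← Real.rpow_add hQ0, ← Real.rpow_add_one hQ0.ne']; congr 1; ring
        have h2 : Q0 ^ m = Q0 ^ (m - 1) * Q0 := by rw [← pow_succ]; congr 1; omega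
        rw [← p2, h2, hR, ← h1]; ring
      have hQN : Q0 ^ ε ≤ (Q0 * N) ^ ε := Real.rpow_le_rpow hQ0.le (by nlinarith) hε.le
      have hcmp := PS.pow_compare (k := ((m + 1 : ℕ) : ℝ)) hN hQ hε hε1 (by exact_mod_cast Nat.succ_le_succ hm)
      gcongr ?_ * ?_ + ?_ * ?_
      · rw [p1]
        calc _ ≤ Q0 ^ (2 ^ m) * ((Q0 * N) ^ ε * (1 + N * Q0 ^ (-1 - ((m + 1 : ℕ) : ℝ)))) := by
              gcongr; linarith
          _ = _ := by ring
      · rw [p2, hY]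
        refine (mul_le_mul_of_nonneg_left hcmp (by positivity)).trans (le_of_eq ?_)
        ring
    _ = _ := by ring


end

/-- **The averaged bound for the `k`-th power sums** (inequality (47) of the paper).
For `k ≥ 2`, `κ = 2^{k-1}`, `ε ∈ (0,1)` there is `C(k,ε)` such that for `N, Q₀ ≥ 2`
with `Q₀ > N^{1/(2k)}`, `Q₀/2^{1/k} < N(q₁) ≤ Q₀` and `r₁` coprime to `q₁`,
`∑_{j ≠ 0, N(j) ≤ N Q₀^{ε-k}} |S_k(q₁,r₁,j)|^κ ≤ C (Q₀N)^ε (Q₀^κ + N Q₀^{κ-k-1})`. -/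
theorem averaged_bound_power_sum :
    ∀ k : ℕ, 2 ≤ k → ∀ ε : ℝ, 0 < ε → ε < 1 → ∃ C : ℝ, 0 < C ∧
      ∀ (N Q0 : ℝ), 2 ≤ N → 2 ≤ Q0 → N ^ ((1 : ℝ) / (2 * k)) < Q0 →
      ∀ q1 : GaussianInt, Q0 / (2 : ℝ) ^ ((1 : ℝ) / k) < gN q1 → gN q1 ≤ Q0 →
      ∀ r1 : GaussianInt, IsCoprime r1 q1 →
      (∑' j : {j : GaussianInt // j ≠ 0 ∧ gN j ≤ N * Q0 ^ (ε - k)},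
          ‖Sk k Q0 q1 r1 (j : GaussianInt)‖ ^ (2 ^ (k - 1)))
        ≤ C * (Q0 * N) ^ ε *
            (Q0 ^ (((2 : ℝ) ^ (k - 1) : ℝ)) + N * Q0 ^ (((2 : ℝ) ^ (k - 1) : ℝ) - k - 1)) := by
  intro k hk ε hε hε1
  obtain ⟨m, rfl⟩ : ∃ m, k = m + 1 := ⟨k - 1, by omega⟩
  obtain ⟨C, hC, h⟩ := PS.main m (by omega) ε hε hε1
  refine ⟨C, hC, ?_⟩
  intro N Q0 hN hQ _ q1 h1 h2 r1 hc
  have hQ0 : 0 < Q0 := by linarith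
  have hpow : gN (q1 ^ (m + 1)) = gN q1 ^ (m + 1) := map_pow PS.gNh _ _
  have hfin : {j : GaussianInt | j ≠ 0 ∧ gN j ≤ N * Q0 ^ (ε - ((m + 1 : ℕ) : ℝ))}.Finite :=
    (PS.finite_ball _).subset fun j hj => hj.2
  have h3 := h N Q0 hN hQ q1 (by
      rw [hpow]
      have h4 : (Q0 / (2 : ℝ) ^ ((1 : ℝ) / ((m + 1 : ℕ) : ℝ))) ^ (m + 1) < gN q1 ^ (m + 1) :=
        pow_lt_pow_left₀ h1 (by positivity) (by omega)
      rwa [div_pow, ← Real.rpow_natCast ((2 : ℝ) ^ _) (m + 1), ← Real.rpow_mul (by norm_num),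
        one_div_mul_cancel (by positivity), Real.rpow_one] at h4)
    (by rw [hpow]; exact pow_le_pow_left₀ (PS.gN_nonneg _) h2 _) r1 hc hfin.toFinset
    (fun j hj => hfin.mem_toFinset.1 hj)
  have h5 : (∑' j : {j : GaussianInt // j ≠ 0 ∧ gN j ≤ N * Q0 ^ (ε - ((m + 1 : ℕ) : ℝ))},
      ‖Sk (m + 1) Q0 q1 r1 (j : GaussianInt)‖ ^ (2 ^ m)) =
      ∑ j ∈ hfin.toFinset, ‖Sk (m + 1) Q0 q1 r1 j‖ ^ (2 ^ m) := by
    rw [← Finset.tsum_subtype' hfin.toFinset (fun j => ‖Sk (m + 1) Q0 q1 r1 j‖ ^ (2 ^ m)), hfin.coe_toFinset]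
    rfl
  rw [Nat.add_sub_cancel, h5]
  refine h3.trans (le_of_eq ?_)
  have e1 : Q0 ^ ((2 : ℝ) ^ m) = Q0 ^ (2 ^ m) := by
    rw [← Real.rpow_natCast Q0 (2 ^ m)]; norm_num
  have e2 : Q0 ^ ((2 : ℝ) ^ m - ((m + 1 : ℕ) : ℝ) - 1) = Q0 ^ (2 ^ m) * Q0 ^ (-1 - ((m + 1 : ℕ) : ℝ)) := by
    rw [← e1, ← Real.rpow_add hQ0]; congr 1; ring
  rw [e1, e2]
  ring
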